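/- Hajós's theorem: if Λ ⊂ ℝ^d is a unimodular lattice such that the only lattice point in the open cube (−1,1)^d is the origin, then Λ contains at least one of the standard basis vectors e_1, …, e_d. -/

import Mathlib

def IsUnimodularLattice (d : ℕ) (Λ : Set (Fin d → ℝ)) : Prop :=
  ∃ g : Matrix (Fin d) (Fin d) ℝ, g.det = 1 ∧
    Λ = {x | ∃ v : Fin d → ℤ, x = g.mulVec (fun i => (v i : ℝ))}

/-!
The translates of the unit cube by the lattice `Λ` are disjoint, so by volume they tile, and the
cube is a fundamental domain. Hence the integral over the cube of every nontrivial character that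
is trivial on `Λ` vanishes, which forces every nonzero vector of the dual lattice to have a nonzero
integer coordinate. A coordinate that is an integer on the whole dual lattice yields a standard
basis vector in `Λ`.

To find it, apply `ℚ`-linear maps `ℝ → ℚ` that fix `1` and approximate the identity: they fix
integer coordinates and reduce to a rational lattice, where the claim concerns a finite abelian
group `G` that is factorized by simplices `{0, a, …, (q - 1) • a}`, and says that `q • a = 0` for
one of them. Refining the simplices, one may take every `q` to be prime.

The factorization means that every nontrivial character `χ` satisfies `χ a ^ q = 1 ≠ χ a` for one
of the simplices. Relaxing this to `χ a ^ q = 1` for a single simplex covers the whole dual group.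
In an irredundant subcover by `n` such sets, the characters trivial at all the points involved
form a subgroup whose index has fewer than `n` prime factors. Dually these points generate a
subgroup so small that it is already factorized by the simplices it contains, which are fewer than
all, and induction applies.
-/

section IrredundantCover

open ArithmeticFunction

variable {Γ ι : Type*} [Group Γ] {C : ι → Set Γ} {K : ι → Subgroup Γ} {S : Finset ι} {x : Γ}
  {L : Subgroup Γ}

theorem cardFactors_relIndex_inf (H K L : Subgroup Γ) [H.FiniteIndex] [K.FiniteIndex] :
    cardFactors ((H ⊓ K).relIndex L) =
      cardFactors (H.relIndex (K ⊓ L)) + cardFactors (K.relIndex L) := by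
  have := Subgroup.isFiniteRelIndex_of_finiteIndex (H := H) (K := K ⊓ L)
  have := Subgroup.isFiniteRelIndex_of_finiteIndex (H := K) (K := L)
  rw [← Subgroup.relIndex_inf_mul_relIndex,
    cardFactors_mul Subgroup.relIndex_ne_zero Subgroup.relIndex_ne_zero]

theorem cardFactors_relIndex_le (H : Subgroup Γ) {M L : Subgroup Γ} [H.FiniteIndex]
    [M.FiniteIndex] (hML : M ≤ L) :
    cardFactors (H.relIndex L) ≤ cardFactors (H.relIndex M) + cardFactors (M.relIndex L) := by
  have hsum := cardFactors_relIndex_inf H M L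
  rw [inf_comm, cardFactors_relIndex_inf, inf_eq_left.2 hML] at hsum
  omega

/-- A union `C` of left cosets of `K` that contains no coset of a subgroup outside `K`, and such
that every coset met by `C` but not contained in `C` has a subcoset of prime index that avoids `C`.
These are the properties of sets of characters on which the covering argument rests. -/
structure IsPrimeAvoiding (C : Set Γ) (K : Subgroup Γ) : Prop where
  mul_mem : ∀ x ∈ C, ∀ k ∈ K, x * k ∈ C
  le_of_coset_subset : ∀ x, ∀ L : Subgroup Γ, (∀ l ∈ L, x * l ∈ C) → L ≤ K
  exists_disjoint_coset : ∀ x, ∀ L : Subgroup Γ, (∃ l ∈ L, x * l ∈ C) → (∃ l ∈ L, x * l ∉ C) →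
    ∃ M ≤ L, (M.relIndex L).Prime ∧ ∃ y ∈ L, ∀ m ∈ M, x * y * m ∉ C

/-- The sets `C i`, `i ∈ S`, cover the coset `x * L`, and none of them can be left out. -/
structure IsIrredundantCover (C : ι → Set Γ) (S : Finset ι) (x : Γ) (L : Subgroup Γ) :
    Prop where
  cover : ∀ l ∈ L, ∃ i ∈ S, x * l ∈ C i
  irredundant : ∀ i ∈ S, ∃ l ∈ L, ∀ j ∈ S, x * l ∈ C j → j = i

theorem exists_isIrredundantCover (h : ∀ l ∈ L, ∃ i ∈ S, x * l ∈ C i) :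
    ∃ T ⊆ S, IsIrredundantCover C T x L := by
  classical
  induction S using Finset.strongInduction with
  | H S ih =>
    by_cases hS : ∀ i ∈ S, ∃ l ∈ L, ∀ j ∈ S, x * l ∈ C j → j = i
    · exact ⟨S, subset_rfl, h, hS⟩
    · push Not at hS
      obtain ⟨i, hi, hi'⟩ := hS
      obtain ⟨T, hT, hcov⟩ := ih (S.erase i) (Finset.erase_ssubset hi) fun l hl ↦ by
        obtain ⟨j, hj, hjC, hne⟩ := hi' l hl
        exact ⟨j, Finset.mem_erase.2 ⟨hne, hj⟩, hjC⟩
      exact ⟨T, hT.trans (Finset.erase_subset _ _), hcov⟩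

namespace IsIrredundantCover

-- A point of `x * L` covered only by some `C i` with `i ∉ R` stays outside all `C j` with `j ∈ R`
-- under translation by `⨅ j ∈ R, K j`.
theorem exists_sdiff (h : IsIrredundantCover C S x L) {R : Finset ι} (hRS : R ⊂ S)
    (hC : ∀ j ∈ R, ∀ y ∈ C j, ∀ k ∈ K j, y * k ∈ C j) [DecidableEq ι] :
    ∃ T ⊆ S \ R, ∃ y, IsIrredundantCover C T y ((⨅ j ∈ R, K j) ⊓ L) := by
  obtain ⟨i, hiS, hiR⟩ := Finset.exists_of_ssubset hRS
  obtain ⟨l, hl, honly⟩ := h.irredundant i hiS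
  obtain ⟨T, hT, hcov⟩ := exists_isIrredundantCover (C := C) (S := S \ R) (x := x * l)
    (L := (⨅ j ∈ R, K j) ⊓ L) fun k hk ↦ by
      obtain ⟨hkR, hkL⟩ := Subgroup.mem_inf.1 hk
      obtain ⟨j, hjS, hj⟩ := h.cover (l * k) (mul_mem hl hkL)
      refine ⟨j, Finset.mem_sdiff.2 ⟨hjS, fun hjR ↦ hiR ?_⟩, by rwa [mul_assoc]⟩
      have hxl : x * l ∈ C j := by
        simpa [mul_assoc] using hC j hjR _ hj _ (inv_mem (iInf₂_le (f := fun i _ ↦ K i) j hjR hkR))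
      rwa [← honly j hjS hxl]
  exact ⟨T, hT, _, hcov⟩

theorem cardFactors_relIndex_inf_lt [Finite Γ] [DecidableEq ι]
    (hC : ∀ i, ∀ y ∈ C i, ∀ k ∈ K i, y * k ∈ C i) (h : IsIrredundantCover C S x L)
    (ih : ∀ T ⊂ S, ∀ y M, IsIrredundantCover C T y M →
      cardFactors ((⨅ i ∈ T, K i).relIndex M) < T.card)
    {R : Finset ι} (hR : R.Nonempty) (hRS : R ⊂ S) :
    cardFactors ((⨅ i ∈ S, K i).relIndex ((⨅ i ∈ R, K i) ⊓ L)) < (S \ R).card := by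
  -- The indices outside `R` are used up in batches `T`, each with fewer prime factors than indices.
  induction hD : S \ R using Finset.strongInduction generalizing R with
  | H D ihD =>
  subst hD
  obtain ⟨T, hT, y, hcov⟩ := h.exists_sdiff hRS fun j _ ↦ hC j
  have hTS : T ⊂ S := hT.trans_ssubset (Finset.sdiff_ssubset hRS.1 hR)
  have hlt := ih T hTS y _ hcov
  have hinf : ⨅ i ∈ S, K i = (⨅ i ∈ S, K i) ⊓ ⨅ i ∈ T, K i :=
    (inf_eq_left.2 (biInf_mono hTS.1)).symm
  have hunion : (⨅ i ∈ R ∪ T, K i) ⊓ L = (⨅ i ∈ T, K i) ⊓ ((⨅ i ∈ R, K i) ⊓ L) := by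
    rw [Finset.iInf_union, inf_comm (⨅ i ∈ R, K i), inf_assoc]
  have hsdiff : S \ (R ∪ T) = (S \ R) \ T := sdiff_sdiff_left.symm
  have hcard := Finset.card_sdiff_add_card_eq_card hT
  rw [hinf, cardFactors_relIndex_inf, ← hunion]
  rcases (Finset.union_subset hRS.1 hTS.1).eq_or_ssubset with heq | hss
  · rw [heq, Subgroup.relIndex_eq_one.2 inf_le_left, cardFactors_one]
    omega
  · have := ihD _ (Finset.sdiff_ssubset hT (Finset.card_pos.1 (by omega)))
      (hR.mono Finset.subset_union_left) hss hsdiff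
    omega

theorem cardFactors_relIndex_lt [Finite Γ] (hC : ∀ i, IsPrimeAvoiding (C i) (K i))
    (h : IsIrredundantCover C S x L) :
    cardFactors ((⨅ i ∈ S, K i).relIndex L) < S.card := by
  classical
  induction S using Finset.strongInduction generalizing x L with
  | H S ih =>
  obtain ⟨i, hiS, -⟩ := h.cover 1 (one_mem L)
  by_cases hfull : ∀ l ∈ L, x * l ∈ C i
  · have hS : S = {i} := Finset.eq_singleton_iff_unique_mem.2 ⟨hiS, fun j hj ↦ by
      obtain ⟨k, hk, hkj⟩ := h.irredundant j hj
      exact (hkj i hiS (hfull k hk)).symm⟩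
    have hLK := (hC i).le_of_coset_subset x L hfull
    simp [hS, Subgroup.relIndex_eq_one.2 hLK]
  obtain ⟨l, hl, honly⟩ := h.irredundant i hiS
  have hli : x * l ∈ C i := by
    obtain ⟨j, hj, hjC⟩ := h.cover l hl
    rwa [← honly j hj hjC]
  push Not at hfull
  obtain ⟨M, hML, hp, y, hy, hM⟩ := (hC i).exists_disjoint_coset x L ⟨l, hl, hli⟩ hfull
  -- The subcoset that avoids `C i` is covered without `i`, and it costs a single prime factor.
  obtain ⟨T, hTS, hT⟩ := exists_isIrredundantCover (C := C) (S := S.erase i) (x := x * y) (L := M)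
    fun m hm ↦ by
      obtain ⟨j, hj, hjC⟩ := h.cover (y * m) (mul_mem hy (hML hm))
      rw [← mul_assoc] at hjC
      exact ⟨j, Finset.mem_erase.2 ⟨by rintro rfl; exact hM m hm hjC, hj⟩, hjC⟩
  have hTss : T ⊂ S := hTS.trans_ssubset (Finset.erase_ssubset hiS)
  have hTM := ih T hTss hT
  have hTL := cardFactors_relIndex_le (⨅ i ∈ T, K i) hML
  rw [cardFactors_apply_prime hp] at hTL
  have hSL := cardFactors_relIndex_inf_lt (fun i ↦ (hC i).mul_mem) h
    (fun T hT y M hcov ↦ ih T hT hcov) (Finset.card_pos.1 (by omega)) hTss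
  rw [← inf_eq_left.2 (biInf_mono hTss.1 : ⨅ i ∈ S, K i ≤ ⨅ i ∈ T, K i),
    cardFactors_relIndex_inf]
  have := Finset.card_sdiff_add_card_eq_card hTss.1
  omega

end IsIrredundantCover

end IrredundantCover

section PrimeAvoiding

open ArithmeticFunction

variable {Γ R : Type*} [Group Γ] [CommRing R] [IsDomain R] {f : Γ →* Rˣ} {L : Subgroup Γ}

theorem zpowers_eq_rootsOfUnity {p : ℕ} (hp : p.Prime) {z : Rˣ} (hz : z ^ p = 1) (hz1 : z ≠ 1) :
    Subgroup.zpowers z = rootsOfUnity p R := by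
  have := Fact.mk hp
  have : NeZero p := ⟨hp.ne_zero⟩
  refine Subgroup.eq_of_le_of_card_ge (Subgroup.zpowers_le.2 hz) ?_
  rw [Nat.card_zpowers, orderOf_eq_prime hz hz1]
  exact card_rootsOfUnity R p

theorem map_eq_rootsOfUnity {p : ℕ} (hp : p.Prime) (hpow : ∀ l ∈ L, f l ^ p = 1)
    (hL : ¬ L ≤ f.ker) : L.map f = rootsOfUnity p R := by
  obtain ⟨l, hl, hfl⟩ := Set.not_subset.1 hL
  refine le_antisymm (Subgroup.map_le_iff_le_comap.2 hpow) ?_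
  rw [← zpowers_eq_rootsOfUnity hp (hpow l hl) hfl, Subgroup.zpowers_le]
  exact Subgroup.mem_map_of_mem f hl

theorem relIndex_ker_of_pow_eq_one {p : ℕ} (hp : p.Prime) (hpow : ∀ l ∈ L, f l ^ p = 1)
    (hL : ¬ L ≤ f.ker) : f.ker.relIndex L = p := by
  have := Fact.mk hp
  obtain ⟨l, hl, hfl⟩ := Set.not_subset.1 hL
  rw [Subgroup.relIndex_ker, map_eq_rootsOfUnity hp hpow hL,
    ← zpowers_eq_rootsOfUnity hp (hpow l hl) hfl, Nat.card_zpowers,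
    orderOf_eq_prime (hpow l hl) hfl]

theorem exists_le_relIndex_prime [Finite Γ] (hL : ¬ L ≤ f.ker) :
    ∃ M ≤ L, (M.relIndex L).Prime ∧ f.ker ⊓ L ≤ M := by
  have : Finite (L.map f) := Finite.Set.finite_image (L : Set Γ) f
  set n := Monoid.exponent (L.map f)
  have hn0 : n ≠ 0 := Monoid.exponent_ne_zero_of_finite
  have hexp : ∀ l ∈ L, f l ^ n = 1 := fun l hl ↦
    congrArg Subtype.val (Monoid.pow_exponent_eq_one (⟨f l, l, hl, rfl⟩ : L.map f))
  have hn1 : n ≠ 1 := fun h ↦ hL fun l hl ↦ by simpa [h] using hexp l hl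
  have hp := Nat.minFac_prime hn1
  set p := n.minFac
  have hpn : n / p * p = n := Nat.div_mul_cancel (Nat.minFac_dvd n)
  have hpow : ∀ l ∈ L, (f ^ (n / p)) l ^ p = 1 := fun l hl ↦ by
    rw [MonoidHom.pow_apply, ← pow_mul, hpn, hexp l hl]
  have hker : ¬ L ≤ (f ^ (n / p)).ker := fun h ↦ by
    have hdvd : n ∣ n / p := Monoid.exponent_dvd_of_forall_pow_eq_one <| by
      rintro ⟨_, l, hl, rfl⟩
      exact Subtype.ext (h hl)
    exact (Nat.le_of_dvd (Nat.div_pos (Nat.minFac_le (by omega)) hp.pos) hdvd).not_gt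
      (Nat.div_lt_self (by omega) hp.one_lt)
  refine ⟨(f ^ (n / p)).ker ⊓ L, inf_le_right, ?_, inf_le_inf_right L fun l hl ↦ ?_⟩
  · rwa [Subgroup.inf_relIndex_right, relIndex_ker_of_pow_eq_one hp hpow hker]
  · rw [MonoidHom.mem_ker] at hl ⊢
    rw [MonoidHom.pow_apply, hl, one_pow]

theorem exists_coset_ne_one [Finite Γ] (hL : ¬ L ≤ f.ker) (x : Γ) :
    ∃ M ≤ L, (M.relIndex L).Prime ∧ ∃ y ∈ L, ∀ m ∈ M, f (x * y * m) ≠ 1 := by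
  obtain ⟨M, hML, hp, hM⟩ := exists_le_relIndex_prime hL
  refine ⟨M, hML, hp, ?_⟩
  obtain ⟨k, hk, hkM⟩ : ∃ k ∈ L, k ∉ M := by
    by_contra! h
    exact hp.ne_one (Subgroup.relIndex_eq_one.2 h)
  by_cases hx : ∃ u ∈ L, f (x * u) = 1
  · obtain ⟨u, hu, hxu⟩ := hx
    refine ⟨u * k, mul_mem hu hk, fun m hm h ↦ hkM ?_⟩
    have hkm : k * m ∈ M := by
      refine hM ⟨?_, mul_mem hk (hML hm)⟩
      rwa [← mul_assoc, mul_assoc, map_mul, hxu, one_mul] at h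
    exact (mul_mem_cancel_right hm).1 hkm
  · push Not at hx
    exact ⟨1, one_mem L, fun m hm ↦ by simpa using hx m (hML hm)⟩

theorem isPrimeAvoiding_ker [Finite Γ] (f : Γ →* Rˣ) : IsPrimeAvoiding {x | f x = 1} f.ker where
  mul_mem x hx k hk := by
    rw [Set.mem_ofPred_eq] at hx ⊢
    rw [map_mul, hx, MonoidHom.mem_ker.1 hk, one_mul]
  le_of_coset_subset x L h l hl := by
    have h1 : f (x * 1) = 1 := h 1 (one_mem L)
    have h2 : f (x * l) = 1 := h l hl
    rw [mul_one] at h1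
    rwa [map_mul, h1, one_mul] at h2
  exists_disjoint_coset x L := by
    rintro ⟨u, hu, hxu⟩ ⟨w, hw, hxw⟩
    refine exists_coset_ne_one (fun h ↦ hxw ?_) x
    rw [Set.mem_ofPred_eq, map_mul, MonoidHom.mem_ker.1 (h hu)] at hxu
    rwa [Set.mem_ofPred_eq, map_mul, MonoidHom.mem_ker.1 (h hw)]

theorem isPrimeAvoiding_pow_eq_one_ne_one [Finite Γ] (f : Γ →* Rˣ) {q : ℕ} (hq : q.Prime) :
    IsPrimeAvoiding {x | f x ^ q = 1 ∧ f x ≠ 1} f.ker where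
  mul_mem x hx k hk := by
    rw [Set.mem_ofPred_eq] at hx ⊢
    rwa [map_mul, MonoidHom.mem_ker.1 hk, mul_one]
  le_of_coset_subset x L h := by
    by_contra hL
    have hx : f x ^ q = 1 := by simpa using (h 1 (one_mem L)).1
    have hpow : ∀ l ∈ L, f l ^ q = 1 := fun l hl ↦ by
      simpa [mul_pow, hx] using (h l hl).1
    obtain ⟨l, hl, hxl⟩ : (f x)⁻¹ ∈ L.map f := by
      rw [map_eq_rootsOfUnity hq hpow hL]
      exact inv_mem hx
    exact (h l hl).2 (by rw [map_mul, hxl, mul_inv_cancel])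
  exists_disjoint_coset x L := by
    rintro ⟨u, hu, hxu⟩ ⟨w, hw, hxw⟩
    by_cases hL : L ≤ (f ^ q).ker
    · have hpow : ∀ l ∈ L, f l ^ q = 1 := fun l hl ↦ hL hl
      have hx : f x ^ q = 1 := by simpa [mul_pow, hpow u hu] using hxu.1
      have hxw1 : f (x * w) = 1 := by
        by_contra hne
        exact hxw ⟨by rw [map_mul, mul_pow, hx, hpow w hw, one_mul], hne⟩
      have hker : ¬ L ≤ f.ker := fun h ↦ hxu.2 <| by
        rw [← hxw1, map_mul, map_mul, MonoidHom.mem_ker.1 (h hu), MonoidHom.mem_ker.1 (h hw)]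
      refine ⟨f.ker ⊓ L, inf_le_right, ?_, w, hw, fun m hm h ↦ h.2 ?_⟩
      · rwa [Subgroup.inf_relIndex_right, relIndex_ker_of_pow_eq_one hq hpow hker]
      · rw [map_mul, hxw1, MonoidHom.mem_ker.1 hm.1, one_mul]
    · obtain ⟨M, hML, hp, y, hy, hM⟩ := exists_coset_ne_one hL x
      exact ⟨M, hML, hp, y, hy, fun m hm h ↦ hM m hm h.1⟩

theorem exists_cardFactors_index_le [Finite Γ] {ι : Type*} {f₀ : Γ →* Rˣ} {f : ι → Γ →* Rˣ}
    {q : ι → ℕ} (hq : ∀ j, (q j).Prime) {T : Finset ι}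
    (h : ∀ x, f₀ x = 1 ∨ ∃ j ∈ T, f j x ^ q j = 1 ∧ f j x ≠ 1) :
    ∃ T' ⊆ T, cardFactors (f₀.ker ⊓ ⨅ j ∈ T', (f j).ker).index ≤ T'.card := by
  classical
  let C : Option ι → Set Γ := fun o ↦
    o.elim {x | f₀ x = 1} fun j ↦ {x | f j x ^ q j = 1 ∧ f j x ≠ 1}
  let K : Option ι → Subgroup Γ := fun o ↦ o.elim f₀.ker fun j ↦ (f j).ker
  have hC : ∀ o, IsPrimeAvoiding (C o) (K o) :=
    Option.rec (isPrimeAvoiding_ker f₀) fun j ↦ isPrimeAvoiding_pow_eq_one_ne_one (f j) (hq j)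
  obtain ⟨S, hST, hS⟩ := exists_isIrredundantCover (C := C) (S := T.insertNone) (x := 1) (L := ⊤)
    fun x _ ↦ by
      rw [one_mul]
      obtain h0 | ⟨j, hj, hjx⟩ := h x
      · exact ⟨none, Finset.none_mem_insertNone, h0⟩
      · exact ⟨some j, Finset.some_mem_insertNone.2 hj, hjx⟩
  have hnone : none ∈ S := by
    obtain ⟨_ | j, hj, h1⟩ := hS.cover 1 (Subgroup.mem_top 1)
    · exact hj
    · simp [C] at h1
  have hS' : S = S.eraseNone.insertNone := by simp [hnone]
  have hlt := hS.cardFactors_relIndex_lt hC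
  have hK : ⨅ o ∈ S, K o = f₀.ker ⊓ ⨅ j ∈ S.eraseNone, (f j).ker := by
    ext
    simp [K, Subgroup.mem_iInf, Option.forall, hnone]
  refine ⟨S.eraseNone, fun j hj ↦ ?_, ?_⟩
  · exact Finset.some_mem_insertNone.1 (hST (Finset.mem_eraseNone.1 hj))
  rw [hK, Subgroup.relIndex_top_right, hS', Finset.card_insertNone] at hlt
  simpa using Nat.lt_succ_iff.1 hlt

end PrimeAvoiding

section Annihilator

variable {G : Type*} [AddCommGroup G]

/-- Evaluation of characters at `a`, as a homomorphism into the units of `ℂ`: its kernel consists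
of the characters that are trivial at `a`. -/
noncomputable def charEval (a : G) : AddChar G ℂ →* ℂˣ :=
  MonoidHom.toHomUnits { toFun := fun χ ↦ χ a, map_one' := rfl, map_mul' := fun _ _ ↦ rfl }

theorem coe_charEval (a : G) (χ : AddChar G ℂ) : (charEval a χ : ℂ) = χ a :=
  rfl

theorem charEval_eq_one {a : G} {χ : AddChar G ℂ} : charEval a χ = 1 ↔ χ a = 1 := by
  rw [← Units.val_inj, coe_charEval, Units.val_one]

theorem charEval_pow_eq_one {a : G} {χ : AddChar G ℂ} {n : ℕ} :
    charEval a χ ^ n = 1 ↔ χ a ^ n = 1 := by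
  rw [← Units.val_inj, Units.val_pow_eq_pow_val, coe_charEval, Units.val_one]

/-- The annihilator of a set `s` in the dual group: the characters that are trivial on `s`. -/
noncomputable def charAnnihilator (s : Set G) : Subgroup (AddChar G ℂ) :=
  ⨅ a ∈ s, (charEval a).ker

theorem mem_charAnnihilator {s : Set G} {χ : AddChar G ℂ} :
    χ ∈ charAnnihilator s ↔ ∀ a ∈ s, χ a = 1 := by
  simp [charAnnihilator, Subgroup.mem_iInf, MonoidHom.mem_ker, charEval_eq_one]

theorem charAnnihilator_closure (s : Set G) :
    charAnnihilator (AddSubgroup.closure s : Set G) = charAnnihilator s := by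
  ext χ
  rw [mem_charAnnihilator, mem_charAnnihilator]
  exact AddSubgroup.closure_le χ.toAddMonoidHom.ker

/-- The character of `G ⧸ H` induced by a character of `G` that is trivial on `H`. -/
def quotientAddChar {M : Type*} [CommMonoid M] (H : AddSubgroup G) (χ : AddChar G M)
    (hχ : ∀ a ∈ H, χ a = 1) : AddChar (G ⧸ H) M :=
  AddChar.toAddMonoidHomEquiv.symm (QuotientAddGroup.lift H χ.toAddMonoidHom hχ)

theorem card_charAnnihilator [Finite G] (B : AddSubgroup G) :
    Nat.card (charAnnihilator (B : Set G)) = B.index := by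
  let e : AddChar (G ⧸ B) ℂ ≃ charAnnihilator (B : Set G) :=
    { toFun := fun ψ ↦ ⟨ψ.compAddMonoidHom (QuotientAddGroup.mk' B),
        mem_charAnnihilator.2 fun b hb ↦ by
          rw [AddChar.compAddMonoidHom_apply, QuotientAddGroup.mk'_apply,
            (QuotientAddGroup.eq_zero_iff b).2 hb, AddChar.map_zero_eq_one]⟩
      invFun := fun χ ↦ quotientAddChar B χ (mem_charAnnihilator.1 χ.2)
      left_inv := fun ψ ↦ AddChar.ext _ _ fun x ↦ QuotientAddGroup.induction_on x fun _ ↦ rfl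
      right_inv := fun χ ↦ rfl }
  have := Fintype.ofFinite (G ⧸ B)
  rw [← Nat.card_congr e, Nat.card_eq_fintype_card, AddChar.card_eq, ← Nat.card_eq_fintype_card,
    AddSubgroup.index]

theorem index_charAnnihilator [Finite G] (s : Set G) :
    (charAnnihilator s).index = Nat.card (AddSubgroup.closure s) := by
  have := Fintype.ofFinite G
  have hcard : Nat.card (AddChar G ℂ) = Nat.card G := by
    rw [Nat.card_eq_fintype_card, AddChar.card_eq, ← Nat.card_eq_fintype_card]
  have hmul := (charAnnihilator s).card_mul_index
  rw [← charAnnihilator_closure, card_charAnnihilator, hcard,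
    ← (AddSubgroup.closure s).index_mul_card, charAnnihilator_closure] at hmul
  exact Nat.eq_of_mul_eq_mul_left (Nat.pos_of_ne_zero AddSubgroup.index_ne_zero_of_finite) hmul

end Annihilator

section Simplex

open ArithmeticFunction

theorem sum_range_pow_eq_zero_iff {R : Type*} [CommRing R] [IsDomain R] [CharZero R] {z : R}
    {n : ℕ} (hn : n ≠ 0) : ∑ c ∈ Finset.range n, z ^ c = 0 ↔ z ^ n = 1 ∧ z ≠ 1 := by
  rcases eq_or_ne z 1 with rfl | hz
  · simp [hn]
  · rw [← sub_eq_zero (a := z ^ n), ← mul_geom_sum, mul_eq_zero, sub_eq_zero]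
    simp [hz]

variable {G ι : Type*} [AddCommGroup G] [Fintype ι]

/-- The sum map of the simplices `{0, a j, …, (q j - 1) • a j}`. That it is bijective means that
the group is factorized by these simplices. -/
def simplexSum (a : ι → G) (q : ι → ℕ) (k : ∀ j, Fin (q j)) : G :=
  ∑ j, (k j : ℕ) • a j

theorem map_simplexSum {H : Type*} [AddCommGroup H] (φ : G →+ H) (a : ι → G) (q : ι → ℕ)
    (k : ∀ j, Fin (q j)) : φ (simplexSum a q k) = simplexSum (φ ∘ a) q k := by
  simp [simplexSum]

theorem sum_addChar_simplexSum {R : Type*} [CommSemiring R] [DecidableEq ι] (χ : AddChar G R)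
    (a : ι → G) (q : ι → ℕ) :
    ∑ k, χ (simplexSum a q k) = ∏ j, ∑ c ∈ Finset.range (q j), χ (a j) ^ c := by
  simp_rw [← Fin.sum_univ_eq_sum_range, Finset.prod_univ_sum, Fintype.piFinset_univ]
  refine Finset.sum_congr rfl fun k _ ↦ ?_
  simp_rw [← AddChar.map_nsmul_eq_pow]
  exact map_prod χ.toMonoidHom (fun j ↦ Multiplicative.ofAdd ((k j : ℕ) • a j)) Finset.univ

theorem sum_addChar_simplexSum_eq_zero_iff {R : Type*} [CommRing R] [IsDomain R] [CharZero R]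
    [DecidableEq ι] {χ : AddChar G R} {a : ι → G} {q : ι → ℕ} (hq : ∀ j, q j ≠ 0) :
    ∑ k, χ (simplexSum a q k) = 0 ↔ ∃ j, χ (a j) ^ q j = 1 ∧ χ (a j) ≠ 1 := by
  simp [sum_addChar_simplexSum, Finset.prod_eq_zero_iff, sum_range_pow_eq_zero_iff (hq _)]

theorem exists_pow_eq_one_of_bijective_simplexSum {R : Type*} [CommRing R] [IsDomain R]
    [CharZero R] {a : ι → G} {q : ι → ℕ} (hq : ∀ j, q j ≠ 0)
    (h : (simplexSum a q).Bijective) {χ : AddChar G R} (hχ : χ ≠ 0) :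
    ∃ j, χ (a j) ^ q j = 1 ∧ χ (a j) ≠ 1 := by
  classical
  have := Fintype.ofBijective _ h
  rw [← sum_addChar_simplexSum_eq_zero_iff hq, h.sum_comp χ]
  exact AddChar.sum_eq_zero_iff_ne_zero.2 hχ

theorem card_mul_card_simplexSum_fiber [Fintype G] [DecidableEq G] [DecidableEq ι] {a : ι → G}
    {q : ι → ℕ} (hq : ∀ j, q j ≠ 0)
    (h : ∀ χ : AddChar G ℂ, χ ≠ 0 → ∃ j, χ (a j) ^ q j = 1 ∧ χ (a j) ≠ 1) (g : G) :
    Fintype.card G * {k | simplexSum a q k = g}.toFinset.card = ∏ j, q j := by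
  have hsum : ∑ k, ∑ χ : AddChar G ℂ, χ (simplexSum a q k - g) = ∏ j, (q j : ℂ) := by
    rw [Finset.sum_comm, Finset.sum_eq_single 0 (fun χ _ hχ ↦ ?_) (by simp)]
    · simp
    · simp_rw [AddChar.map_sub_eq_div, ← Finset.sum_div]
      rw [(sum_addChar_simplexSum_eq_zero_iff hq).2 (h χ hχ), zero_div]
  simp_rw [AddChar.sum_apply_eq_ite, sub_eq_zero, ← Finset.sum_filter, Finset.sum_const,
    nsmul_eq_mul] at hsum
  rw [mul_comm, Set.toFinset_ofPred]
  exact_mod_cast hsum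

theorem bijective_simplexSum_of_forall_addChar [Finite G] {a : ι → G} {q : ι → ℕ}
    (hq : ∀ j, q j ≠ 0) (h : ∀ χ : AddChar G ℂ, χ ≠ 0 → ∃ j, χ (a j) ^ q j = 1 ∧ χ (a j) ≠ 1)
    (hcard : ∏ j, q j < 2 * Nat.card G) : (simplexSum a q).Bijective := by
  classical
  have := Fintype.ofFinite G
  have hprod : 0 < ∏ j, q j := Finset.prod_pos fun j _ ↦ Nat.pos_of_ne_zero (hq j)
  rw [Function.bijective_iff_existsUnique]
  intro g
  have hfiber := card_mul_card_simplexSum_fiber hq h g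
  have hone : {k | simplexSum a q k = g}.toFinset.card = 1 := by
    rw [Nat.card_eq_fintype_card] at hcard
    nlinarith
  obtain ⟨k, hk⟩ := Finset.card_eq_one.1 hone
  simp only [Finset.ext_iff, Set.mem_toFinset, Set.mem_ofPred_eq, Finset.mem_singleton] at hk
  exact ⟨k, (hk k).2 rfl, fun l hl ↦ (hk l).1 hl⟩

theorem card_eq_card_mul_card_of_bijective_add {X Y : Type*} {f : X → G} {h : Y → G}
    (hfh : Function.Bijective fun p : X × Y ↦ f p.1 + h p.2) {B : AddSubgroup G}
    (hf : ∀ x, f x ∈ B) : Nat.card B = Nat.card X * Nat.card {y // h y ∈ B} := by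
  rw [← Nat.card_prod]
  refine (Nat.card_congr (Equiv.ofBijective
    (fun p : X × {y // h y ∈ B} ↦ (⟨f p.1 + h p.2, add_mem (hf _) p.2.2⟩ : B))
    ⟨fun p p' hp ↦ ?_, fun b ↦ ?_⟩)).symm
  · have := @hfh.1 (p.1, p.2) (p'.1, p'.2) (congrArg Subtype.val hp)
    grind
  · obtain ⟨⟨x, y⟩, hxy⟩ := hfh.2 b
    have hy : h y ∈ B := (B.add_mem_cancel_left (hf x)).1 (hxy ▸ b.2 :)
    exact ⟨(x, ⟨y, hy⟩), Subtype.ext hxy⟩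

theorem cardFactors_prod_of_prime {q : ι → ℕ} (hq : ∀ j, (q j).Prime) :
    cardFactors (∏ j, q j) = Fintype.card ι := by
  rw [Finset.prod, cardFactors_multiset_prod (Finset.prod_ne_zero_iff.2 fun j _ ↦ (hq j).ne_zero)]
  simp [cardFactors_apply_prime (hq _)]

theorem bijective_simplexSum_add_simplexSum [DecidableEq ι] {a : ι → G} {q : ι → ℕ}
    (T : Finset ι) (h : (simplexSum a q).Bijective) :
    Function.Bijective fun k : (∀ j : T, Fin (q j)) × (∀ j : {j // j ∉ T}, Fin (q j)) ↦
      simplexSum (fun j : T ↦ a j) (fun j ↦ q j) k.1 +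
        simplexSum (fun j : {j // j ∉ T} ↦ a j) (fun j ↦ q j) k.2 := by
  rw [← Function.Bijective.of_comp_iff _
    (Equiv.piEquivPiSubtypeProd (· ∈ T) fun j ↦ Fin (q j)).bijective]
  refine (congrArg Function.Bijective (funext fun k ↦ ?_)).mpr h
  rw [simplexSum, ← Fintype.sum_subtype_add_sum_subtype (· ∈ T) fun j ↦ (k j : ℕ) • a j]
  simp only [Function.comp_apply, simplexSum, Equiv.piEquivPiSubtypeProd_apply]
  congr!

theorem bijective_simplexSum_restrict [Finite G] {a : ι → G} {q : ι → ℕ} (hq : ∀ j, (q j).Prime)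
    (h : (simplexSum a q).Bijective) {T : Finset ι} {B : AddSubgroup G} (haB : ∀ j ∈ T, a j ∈ B)
    (hB : cardFactors (Nat.card B) ≤ T.card) :
    (simplexSum (fun j : T ↦ (⟨a j, haB j j.2⟩ : B)) fun j ↦ q j).Bijective := by
  classical
  have hadd := bijective_simplexSum_add_simplexSum T h
  set f := simplexSum (fun j : T ↦ a j) fun j ↦ q j
  set f' := simplexSum (fun j : {j // j ∉ T} ↦ a j) fun j ↦ q j
  have hcard := card_eq_card_mul_card_of_bijective_add hadd (B := B)
    fun k ↦ sum_mem fun j _ ↦ nsmul_mem (haB j j.2) _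
  have hT : Nat.card (∀ j : T, Fin (q j)) = ∏ j : T, q j := by simp
  have hT0 : ∏ j : T, q j ≠ 0 := Finset.prod_ne_zero_iff.2 fun j _ ↦ (hq j).ne_zero
  have hf'0 : Nat.card {k // f' k ∈ B} ≠ 0 := fun h0 ↦ by
    rw [h0, mul_zero] at hcard
    exact Nat.card_pos.ne' hcard
  have hf'1 : Nat.card {k // f' k ∈ B} = 1 := by
    rw [hcard, hT, cardFactors_mul hT0 hf'0, cardFactors_prod_of_prime fun j : T ↦ hq j] at hB
    exact (cardFactors_eq_zero_iff_eq_zero_or_one.1 (by simpa using hB)).resolve_left hf'0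
  obtain ⟨l, -⟩ := (Nat.card_pos_iff.1 (Nat.pos_of_ne_zero hf'0)).1
  have hinj : (simplexSum (fun j : T ↦ (⟨a j, haB j j.2⟩ : B)) fun j ↦ q j).Injective := by
    intro k k' hk
    have hfk : f k = f k' := by
      simpa only [map_simplexSum] using! congrArg B.subtype hk
    exact congrArg Prod.fst (@hadd.1 (k, l) (k', l) (congrArg (· + f' l) hfk))
  exact hinj.bijective_of_nat_card_le (by rw [hcard, hf'1, mul_one])

theorem exists_smul_eq_zero_of_bijective_simplexSum [Nonempty ι] {a : ι → G} {q : ι → ℕ}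
    (hq : ∀ j, (q j).Prime) (h : (simplexSum a q).Bijective) : ∃ j, q j • a j = 0 := by
  classical
  induction hn : Fintype.card ι using Nat.strong_induction_on generalizing ι G with
  | _ n ih =>
  have : Finite G := .of_surjective _ h.2
  obtain ⟨i⟩ := ‹Nonempty ι›
  obtain ⟨T, hT, hΩ⟩ := exists_cardFactors_index_le (f₀ := charEval (q i • a i))
    (f := fun j ↦ charEval (a j)) hq (T := Finset.univ.erase i) fun χ ↦ by
      simp only [charEval_eq_one, charEval_pow_eq_one, ne_eq]
      by_cases hχ : χ = 0
      · simp [hχ]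
      obtain ⟨j, hj, hne⟩ := exists_pow_eq_one_of_bijective_simplexSum (fun j ↦ (hq j).ne_zero) h hχ
      rcases eq_or_ne j i with rfl | hji
      · exact .inl (by rw [AddChar.map_nsmul_eq_pow, hj])
      · exact .inr ⟨j, by simpa using hji, hj, hne⟩
  set B := AddSubgroup.closure (insert (q i • a i) (a '' T)) with hBdef
  have hi : q i • a i ∈ B := AddSubgroup.subset_closure (Set.mem_insert _ _)
  have hB : cardFactors (Nat.card B) ≤ T.card := by
    rw [hBdef, ← index_charAnnihilator]
    simpa only [charAnnihilator, iInf_insert, iInf_image, Finset.mem_coe] using hΩ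
  have haB : ∀ j ∈ T, a j ∈ B := fun j hj ↦
    AddSubgroup.subset_closure (.inr (Set.mem_image_of_mem a hj))
  have hres := bijective_simplexSum_restrict hq h haB hB
  rcases isEmpty_or_nonempty T with hT0 | hT0
  · have : Subsingleton B := hres.2.subsingleton
    exact ⟨i, congrArg Subtype.val (Subsingleton.elim (⟨_, hi⟩ : B) 0)⟩
  · have hlt : Fintype.card T < n := by
      rw [Fintype.card_coe, ← hn, ← Finset.card_univ]
      exact Finset.card_lt_card (hT.trans_ssubset (Finset.erase_ssubset (Finset.mem_univ i)))
    obtain ⟨j, hj⟩ := ih _ hlt (ι := T) (a := fun j ↦ (⟨a j, haB j j.2⟩ : B))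
      (q := fun j ↦ q j) (fun j ↦ hq j) hres rfl
    exact ⟨j, congrArg Subtype.val hj⟩

end Simplex

section EqualLength

-- Mixed radix: the `w t` are the place values of the digits `c < p t` of a number below `N`.
theorem exists_prime_chain (M : Type*) [Monoid M] {N : ℕ} (hN : N ≠ 0) :
    ∃ (e : ℕ) (p w : Fin e → ℕ), (∀ t, (p t).Prime) ∧ ∏ t, p t = N ∧ (∀ t, p t * w t ∣ N) ∧
      ∀ z : M, z ^ N = 1 → z ≠ 1 → ∃ t, (z ^ w t) ^ p t = 1 ∧ z ^ w t ≠ 1 := by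
  induction N using induction_on_primes with
  | zero => exact absurd rfl hN
  | one => exact ⟨0, 0, 0, by simp, by simp, by simp, fun z h hz ↦ absurd (by simpa using h) hz⟩
  | prime_mul r m hr ih =>
    obtain ⟨e, p, w, hp, hprod, hdvd, hz⟩ := ih (right_ne_zero_of_mul hN)
    refine ⟨e + 1, Fin.cons r p, Fin.cons m w, Fin.cases hr hp, ?_, ?_, fun z h1 hne ↦ ?_⟩
    · simp [Fin.prod_univ_succ, hprod]
    · exact Fin.cases dvd_rfl fun t ↦ (hdvd t).mul_left r
    · by_cases hzm : z ^ m = 1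
      · obtain ⟨t, ht⟩ := hz z hzm hne
        exact ⟨t.succ, ht⟩
      · exact ⟨0, by rwa [Fin.cons_zero, Fin.cons_zero, ← pow_mul, mul_comm], hzm⟩

variable {ι : Type*} [Fintype ι] [Nonempty ι] {q : ι → ℕ}

theorem exists_smul_eq_zero_of_forall_addChar {G : Type*} [AddCommGroup G] [Finite G] {a : ι → G}
    (hq : ∀ i, q i ≠ 0) (h : ∀ χ : AddChar G ℂ, χ ≠ 0 → ∃ i, χ (a i) ^ q i = 1 ∧ χ (a i) ≠ 1)
    (hcard : ∏ i, q i < 2 * Nat.card G) : ∃ i, q i • a i = 0 := by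
  choose e p w hp hprod hdvd hchain using fun i ↦ exists_prime_chain ℂ (hq i)
  have hbij : (simplexSum (fun j : Σ i, Fin (e i) ↦ w j.1 j.2 • a j.1)
      fun j ↦ p j.1 j.2).Bijective := by
    refine bijective_simplexSum_of_forall_addChar (fun j ↦ (hp j.1 j.2).ne_zero) (fun χ hχ ↦ ?_)
      (by simpa only [Fintype.prod_sigma, hprod])
    obtain ⟨i, hi, hne⟩ := h χ hχ
    obtain ⟨t, ht⟩ := hchain i _ hi hne
    exact ⟨⟨i, t⟩, by simpa only [AddChar.map_nsmul_eq_pow] using ht⟩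
  rcases isEmpty_or_nonempty (Σ i, Fin (e i)) with hempty | hne
  · have : Subsingleton G := hbij.2.subsingleton
    exact ⟨Classical.arbitrary ι, Subsingleton.elim _ _⟩
  · obtain ⟨⟨i, t⟩, hit⟩ := exists_smul_eq_zero_of_bijective_simplexSum
      (fun j : Σ i, Fin (e i) ↦ hp j.1 j.2) hbij
    obtain ⟨c, hc⟩ := hdvd i t
    exact ⟨i, by rw [hc, mul_comm, mul_smul, mul_smul, hit, smul_zero]⟩

theorem exists_forall_pow_eq_one_of_forall_notMem {E : Type*} [AddCommGroup E] {H : AddSubgroup E}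
    [H.FiniteIndex] {f : ι → AddChar E ℂ} (hq : ∀ i, q i ≠ 0) (hf : ∀ i, ∀ v ∈ H, f i v = 1)
    (h : ∀ v ∉ H, ∃ i, f i v ^ q i = 1 ∧ f i v ≠ 1) (hcard : ∏ i, q i < 2 * H.index) :
    ∃ i, ∀ v, f i v ^ q i = 1 := by
  have := Fintype.ofFinite (E ⧸ H)
  have hdual : Nat.card (AddChar (E ⧸ H) ℂ) = H.index := by
    rw [Nat.card_eq_fintype_card, AddChar.card_eq, ← Nat.card_eq_fintype_card, AddSubgroup.index]
  suffices hdouble : ∀ ψ : AddChar (AddChar (E ⧸ H) ℂ) ℂ, ψ ≠ 0 →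
      ∃ i, ψ (quotientAddChar H (f i) (hf i)) ^ q i = 1 ∧
        ψ (quotientAddChar H (f i) (hf i)) ≠ 1 by
    obtain ⟨i, hi⟩ := exists_smul_eq_zero_of_forall_addChar hq hdouble (hdual.symm ▸ hcard)
    exact ⟨i, fun v ↦ DFunLike.congr_fun hi (v : E ⧸ H)⟩
  intro ψ hψ
  obtain ⟨x, rfl⟩ := AddChar.doubleDualEmb_bijective.2 ψ
  obtain ⟨v, rfl⟩ := QuotientAddGroup.mk_surjective x
  refine h v fun hv ↦ hψ ?_
  rw [(QuotientAddGroup.eq_zero_iff v).2 hv, map_zero]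

end EqualLength

section IntegerValues

open Matrix Filter Topology

/-- The character `x ↦ exp (2πix)` of `ℝ`, with values in `ℂ`. -/
noncomputable def expChar : AddChar ℝ ℂ :=
  Circle.coeHom.compAddChar Real.fourierChar

theorem expChar_apply (x : ℝ) : expChar x = Complex.exp (2 * Real.pi * Complex.I * x) :=
  (Real.fourierChar_apply x).trans (by push_cast; ring_nf)

theorem expChar_eq_one_iff {x : ℝ} : expChar x = 1 ↔ ∃ m : ℤ, x = m := by
  rw [expChar_apply, Complex.exp_eq_one_iff]
  refine exists_congr fun m ↦ ?_
  rw [mul_comm, mul_left_inj' Complex.two_pi_I_ne_zero]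
  norm_cast

theorem tendsto_floor_succ_mul_div_succ (x : ℝ) :
    Tendsto (fun n : ℕ ↦ (⌊(n + 1) * x⌋ : ℝ) / (n + 1)) atTop (𝓝 x) := by
  have hfract : Tendsto (fun n : ℕ ↦ Int.fract ((n + 1) * x) / ((n : ℝ) + 1)) atTop (𝓝 0) :=
    squeeze_zero (fun n ↦ div_nonneg (Int.fract_nonneg _) (by positivity))
      (fun n ↦ div_le_div_of_nonneg_right (Int.fract_lt_one _).le (by positivity))
      tendsto_one_div_add_atTop_nhds_zero_nat
  refine (sub_zero x ▸ hfract.const_sub x).congr fun n ↦ ?_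
  rw [Int.fract, sub_div, mul_div_cancel_left₀ x (by positivity), sub_sub_cancel]

theorem exists_ratLinearMap_tendsto_id : ∃ φ : ℕ → ℝ →ₗ[ℚ] ℚ,
    (∀ n, φ n 1 = 1) ∧ ∀ x : ℝ, Tendsto (fun n ↦ (φ n x : ℝ)) atTop (𝓝 x) := by
  have h1 : LinearIndepOn ℚ id {(1 : ℝ)} := .singleton one_ne_zero
  let b := Module.Basis.extend h1
  have hb (j) : b j = j := Module.Basis.extend_apply_self h1 j
  let φ (n : ℕ) : ℝ →ₗ[ℚ] ℚ := b.constr ℚ fun j ↦ (⌊((n : ℝ) + 1) * j⌋ : ℚ) / (n + 1)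
  have hφ (n) (j) : φ n (b j) = (⌊((n : ℝ) + 1) * j⌋ : ℚ) / (n + 1) := b.constr_basis ℚ _ j
  refine ⟨φ, fun n ↦ ?_, fun x ↦ ?_⟩
  · have hfloor : ⌊((n : ℝ) + 1) * 1⌋ = (n : ℤ) + 1 := by simp
    rw [← show b ⟨1, h1.subset_extend _ rfl⟩ = 1 from hb _, hφ, hfloor]
    push_cast
    exact div_self (by positivity)
  · induction b.mem_span x using Submodule.span_induction with
    | mem x hx =>
      obtain ⟨j, rfl⟩ := hx
      simp_rw [hφ]
      rw [hb]
      push_cast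
      exact tendsto_floor_succ_mul_div_succ j
    | zero => simp
    | add x y _ _ hx hy => simpa using hx.add hy
    | smul c x _ hx =>
      simp_rw [map_smul, smul_eq_mul, Rat.cast_mul, Rat.smul_def]
      exact hx.const_mul (c : ℝ)

variable {ι : Type*} [Fintype ι]

/-- The rows of `L` are linear forms of which, at each nonzero integer vector, at least one takes
a nonzero integer value. -/
def TakesNonzeroInt {R : Type*} [Ring R] (L : Matrix ι ι R) : Prop :=
  ∀ v : ι → ℤ, v ≠ 0 → ∃ i, ∃ m : ℤ, m ≠ 0 ∧ (L *ᵥ fun j ↦ (v j : R)) i = m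

theorem TakesNonzeroInt.map_ratLinearMap {L : Matrix ι ι ℝ} (hL : TakesNonzeroInt L)
    {φ : ℝ →ₗ[ℚ] ℚ} (hφ : φ 1 = 1) : TakesNonzeroInt (L.map φ) := by
  intro v hv
  obtain ⟨i, m, hm, hi⟩ := hL v hv
  refine ⟨i, m, hm, ?_⟩
  have hφm : φ m = m := by simpa [hφ] using map_zsmul φ m 1
  rw [← hφm, ← hi]
  simp only [mulVec, dotProduct, map_sum, Matrix.map_apply]
  refine Finset.sum_congr rfl fun k _ ↦ ?_
  simpa [mul_comm] using (map_zsmul φ (v k) (L i k)).symm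

/-- The character `v ↦ exp (2πi (M *ᵥ v) k)` of `ι → ℤ`. -/
noncomputable def rowChar (M : Matrix ι ι ℚ) (k : ι) : AddChar (ι → ℤ) ℂ :=
  expChar.compAddMonoidHom <| (Rat.castHom ℝ).toAddMonoidHom.comp <|
    (Pi.evalAddMonoidHom _ k).comp <| M.mulVecLin.toAddMonoidHom.comp <|
      (Int.castAddHom ℚ).compLeft ι

theorem rowChar_eq_one_iff {M : Matrix ι ι ℚ} {k : ι} {v : ι → ℤ} :
    rowChar M k v = 1 ↔ ∃ m : ℤ, (M *ᵥ fun j ↦ (v j : ℚ)) k = m :=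
  expChar_eq_one_iff.trans <| exists_congr fun m ↦ by
    rw [← Rat.cast_inj (α := ℝ), Rat.cast_intCast]
    rfl

theorem rowChar_pow_eq_one_iff {M : Matrix ι ι ℚ} {k : ι} {v : ι → ℤ} {n : ℕ} :
    rowChar M k v ^ n = 1 ↔ ∃ m : ℤ, n * (M *ᵥ fun j ↦ (v j : ℚ)) k = m := by
  rw [← AddChar.map_nsmul_eq_pow, rowChar_eq_one_iff]
  have : (fun j ↦ ((n • v) j : ℚ)) = (n : ℚ) • fun j ↦ (v j : ℚ) := by
    ext j
    simp
  rw [this, mulVec_smul, Pi.smul_apply, smul_eq_mul]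

theorem index_range_mulVecLin [DecidableEq ι] {A : Matrix ι ι ℤ} (hA : A.det ≠ 0) :
    (LinearMap.range A.mulVecLin).toAddSubgroup.index = A.det.natAbs := by
  have hinj : Function.Injective A.mulVecLin :=
    LinearMap.ker_eq_bot.1 <| LinearMap.ker_eq_bot'.2 fun _ ↦ eq_zero_of_mulVec_eq_zero hA
  rw [← LinearMap.det_toLin' A]
  exact (Submodule.natAbs_det_equiv _ (LinearEquiv.ofInjective A.mulVecLin hinj)).symm

theorem map_intCast_mulVec_intCast {R : Type*} [Ring R] (A : Matrix ι ι ℤ) (v : ι → ℤ) :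
    A.map (↑) *ᵥ (fun j ↦ (v j : R)) = fun i ↦ ((A *ᵥ v) i : R) :=
  funext fun i ↦ ((Int.castRingHom R).map_mulVec A v i).symm

variable [DecidableEq ι]

theorem exists_mul_map_intCast_eq_natCast {L : Matrix ι ι ℚ} (hL : L.det ≠ 0) :
    ∃ (N : ℕ) (A : Matrix ι ι ℤ), N ≠ 0 ∧ L * A.map (↑) = (N : Matrix ι ι ℚ) := by
  have hN : (L⁻¹.den : ℚ) ≠ 0 := Nat.cast_ne_zero.2 L⁻¹.den_ne_zero
  have hnum : L⁻¹.num.map (↑) = (L⁻¹.den : ℚ) • L⁻¹ :=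
    (inv_smul_eq_iff₀ hN).1 L⁻¹.inv_denom_smul_num
  refine ⟨L⁻¹.den, L⁻¹.num, L⁻¹.den_ne_zero, ?_⟩
  rw [hnum, mul_smul_comm, mul_nonsing_inv L hL.isUnit, Nat.cast_smul_eq_nsmul, nsmul_one]

theorem det_mul_det_of_mul_map_intCast_eq_natCast {R : Type*} [CommRing R] {L : Matrix ι ι R}
    {A : Matrix ι ι ℤ} {N : ℕ} (h : L * A.map (↑) = (N : Matrix ι ι R)) :
    L.det * A.det = N ^ Fintype.card ι := by
  have hdet := congrArg det h
  rwa [det_mul, ← nsmul_one, ← Nat.cast_smul_eq_nsmul R, det_smul, det_one, mul_one,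
    ← Int.cast_det] at hdet

variable {L : Matrix ι ι ℚ} {A : Matrix ι ι ℤ} {N : ℕ}

theorem rowChar_eq_one_of_mem_range (hN : N ≠ 0) (hLA : L * A.map (↑) = (N : Matrix ι ι ℚ))
    {v : ι → ℤ} (hv : v ∈ LinearMap.range A.mulVecLin) (i : ι) :
    rowChar ((N : ℚ)⁻¹ • L) i v = 1 := by
  obtain ⟨w, rfl⟩ := hv
  refine rowChar_eq_one_iff.2 ⟨w i, ?_⟩
  simp_rw [mulVecLin_apply, ← map_intCast_mulVec_intCast, mulVec_mulVec, smul_mul_assoc, hLA,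
    smul_mulVec, natCast_mulVec, inv_smul_smul₀ (Nat.cast_ne_zero (R := ℚ).2 hN)]

theorem TakesNonzeroInt.exists_rowChar_pow_eq_one (hL : TakesNonzeroInt L) (hN : N ≠ 0)
    (hLA : L * A.map (↑) = (N : Matrix ι ι ℚ)) {v : ι → ℤ}
    (hv : v ∉ LinearMap.range A.mulVecLin) :
    ∃ i, rowChar ((N : ℚ)⁻¹ • L) i v ^ N = 1 ∧ rowChar ((N : ℚ)⁻¹ • L) i v ≠ 1 := by
  have hN0 : (N : ℚ) ≠ 0 := Nat.cast_ne_zero.2 hN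
  let x : ι → ℚ := ((N : ℚ)⁻¹ • L) *ᵥ fun j ↦ (v j : ℚ)
  let u : ι → ℤ := v - A *ᵥ fun j ↦ ⌊x j⌋
  have hu : u ≠ 0 := fun h ↦ hv ⟨_, (sub_eq_zero.1 h).symm⟩
  have hfract (i : ι) : (L *ᵥ fun j ↦ (u j : ℚ)) i = N * Int.fract (x i) := by
    have hcast : (fun j ↦ (u j : ℚ)) =
        (fun j ↦ (v j : ℚ)) - A.map (↑) *ᵥ fun j ↦ (⌊x j⌋ : ℚ) := by
      rw [map_intCast_mulVec_intCast]
      exact funext fun j ↦ Int.cast_sub _ _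
    rw [hcast, mulVec_sub, mulVec_mulVec, hLA, natCast_mulVec, Int.fract, mul_sub]
    simp [x, smul_mulVec, hN0]
  obtain ⟨i, m, hm, hi⟩ := hL u hu
  rw [hfract] at hi
  refine ⟨i, rowChar_pow_eq_one_iff.2 ⟨m + N * ⌊x i⌋, ?_⟩, fun h ↦ ?_⟩
  · push_cast
    rw [← hi, ← mul_add, Int.fract_add_floor]
  · obtain ⟨k, hk⟩ := rowChar_eq_one_iff.1 h
    rw [show x i = k from hk, Int.fract_intCast, mul_zero] at hi
    exact hm (by exact_mod_cast hi.symm)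

theorem TakesNonzeroInt.exists_row_int_of_rat [Nonempty ι] (hL : TakesNonzeroInt L)
    (h0 : L.det ≠ 0) (h2 : |L.det| < 2) : ∃ i, ∀ j, ∃ m : ℤ, L i j = m := by
  obtain ⟨N, A, hN, hLA⟩ := exists_mul_map_intCast_eq_natCast h0
  have hN0 : (N : ℚ) ≠ 0 := Nat.cast_ne_zero.2 hN
  have hdet := det_mul_det_of_mul_map_intCast_eq_natCast hLA
  have hA : A.det ≠ 0 := by
    rintro h
    rw [h, Int.cast_zero, mul_zero] at hdet
    exact pow_ne_zero _ hN0 hdet.symm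
  have hindex := index_range_mulVecLin hA
  have : (LinearMap.range A.mulVecLin).toAddSubgroup.FiniteIndex :=
    ⟨by rwa [hindex, Int.natAbs_ne_zero]⟩
  have hcard : ∏ _ : ι, N < 2 * (LinearMap.range A.mulVecLin).toAddSubgroup.index := by
    have hlt : (N : ℚ) ^ Fintype.card ι < 2 * |(A.det : ℚ)| := by
      rw [← abs_of_nonneg (by positivity : 0 ≤ (N : ℚ) ^ _), ← hdet, abs_mul]
      have : (A.det : ℚ) ≠ 0 := Int.cast_ne_zero.2 hA
      gcongr
    rw [hindex, Finset.prod_const, Finset.card_univ]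
    rw [← Int.cast_abs, ← Nat.cast_natAbs] at hlt
    exact_mod_cast hlt
  obtain ⟨i, hi⟩ := exists_forall_pow_eq_one_of_forall_notMem (fun _ ↦ hN)
    (fun i v hv ↦ rowChar_eq_one_of_mem_range hN hLA hv i)
    (fun v hv ↦ hL.exists_rowChar_pow_eq_one hN hLA hv) hcard
  refine ⟨i, fun j ↦ ?_⟩
  obtain ⟨m, hm⟩ := rowChar_pow_eq_one_iff.1 (hi (Pi.single j 1))
  refine ⟨m, ?_⟩
  rw [← hm]
  simp [hN0, mulVec, dotProduct, Pi.single_apply]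

theorem TakesNonzeroInt.exists_row_int [Nonempty ι] {L : Matrix ι ι ℝ} (hL : TakesNonzeroInt L)
    (h0 : L.det ≠ 0) (h2 : |L.det| < 2) : ∃ i, ∀ j, ∃ m : ℤ, L i j = m := by
  obtain ⟨φ, hφ1, hφ⟩ := exists_ratLinearMap_tendsto_id
  by_contra! h
  choose j hj using h
  have hentry : ∀ᶠ n in atTop, ∀ i, (φ n (L i (j i)) : ℝ) ∉ Set.range ((↑) : ℤ → ℝ) :=
    eventually_all.2 fun i ↦ (hφ _).eventually
      (Int.isClosedEmbedding_coe_real.isClosed_range.isOpen_compl.mem_nhds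
        fun ⟨m, hm⟩ ↦ hj i m hm.symm)
  have hdet : Tendsto (fun n ↦ ((L.map (φ n)).det : ℝ)) atTop (𝓝 L.det) := by
    simp_rw [Rat.cast_det]
    exact (continuous_id.matrix_det.tendsto L).comp
      (tendsto_pi_nhds.2 fun i ↦ tendsto_pi_nhds.2 fun j ↦ hφ (L i j))
  obtain ⟨n, hn, hn0, hn2⟩ :=
    (hentry.and ((hdet.eventually_ne h0).and (hdet.abs.eventually_lt_const h2))).exists
  obtain ⟨i, hi⟩ := (hL.map_ratLinearMap (hφ1 n)).exists_row_int_of_rat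
    (by exact_mod_cast hn0) (by exact_mod_cast hn2)
  obtain ⟨m, hm⟩ := hi (j i)
  exact hn i ⟨m, by exact_mod_cast hm.symm⟩

end IntegerValues

section FundamentalDomain

open MeasureTheory Pointwise

theorem isAddFundamentalDomain_of_measure_le {G α : Type*} [AddGroup G] [Countable G]
    [AddAction G α] [MeasurableSpace α] {μ : Measure α} [MeasurableConstVAdd G α]
    [VAddInvariantMeasure G α μ] {s t : Set α} (hs : IsAddFundamentalDomain G s μ)
    (ht : MeasurableSet t) (hdisj : Pairwise fun g h : G ↦ Disjoint (g +ᵥ t) (h +ᵥ t))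
    (hle : μ s ≤ μ t) (hfin : μ s ≠ ⊤) : IsAddFundamentalDomain G t μ := by
  have htg (g : G) : MeasurableSet (g +ᵥ t) := ht.const_vadd g
  set U := ⋃ g : G, g +ᵥ t
  have hU : MeasurableSet U := .iUnion htg
  have hUs : μ t = μ (s ∩ U) := by
    rw [hs.measure_eq_tsum t, Set.inter_comm, ← Measure.restrict_apply hU,
      measure_iUnion hdisj htg]
    exact tsum_congr fun g ↦ (Measure.restrict_apply (htg g)).symm
  have hdiff : μ (s \ U) = 0 := by
    rw [← Set.sdiff_self_inter, measure_sdiff Set.inter_subset_left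
      (hs.nullMeasurableSet.inter hU.nullMeasurableSet) (measure_ne_top_of_subset
        Set.inter_subset_left hfin), ← hUs, tsub_eq_zero_of_le hle]
  have hnull : μ Uᶜ = 0 := by
    refine hs.measure_zero_of_invariant _ (fun g ↦ ?_) (by rwa [Set.inter_comm, ← Set.sdiff_eq])
    rw [Set.vadd_set_compl, Set.vadd_set_iUnion]
    simp_rw [vadd_vadd]
    exact congrArg _ ((Equiv.addLeft g).surjective.iUnion_comp fun h ↦ h +ᵥ t)
  refine ⟨ht.nullMeasurableSet, ?_, fun g h hgh ↦ (hdisj hgh).aedisjoint⟩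
  filter_upwards [mem_ae_iff.2 hnull] with x hx
  obtain ⟨g, hg⟩ := Set.mem_iUnion.1 hx
  exact ⟨-g, Set.mem_vadd_set_iff_neg_vadd_mem.1 hg⟩

theorem setIntegral_addChar_eq_zero {E : Type*} [AddCommGroup E] [MeasurableSpace E]
    [MeasurableAdd E] {μ : Measure E} [μ.IsAddLeftInvariant] {Γ : AddSubgroup E}
    [Countable Γ] {s : Set E} (hs : IsAddFundamentalDomain Γ s μ) {χ : AddChar E ℂ} (hχ : χ ≠ 0)
    (hΓ : ∀ g ∈ Γ, χ g = 1) : ∫ x in s, χ x ∂μ = 0 := by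
  obtain ⟨t, ht⟩ := AddChar.ne_zero_iff.1 hχ
  have htranslate : ∫ x in t +ᵥ s, χ x ∂μ = χ t * ∫ x in s, χ x ∂μ := by
    rw [← integral_const_mul]
    simp_rw [← AddChar.map_add_eq_mul]
    exact (measurePreserving_add_left μ t).setIntegral_image_emb
      (measurableEmbedding_addLeft t) χ s
  have hinv : ∫ x in s, χ x ∂μ = ∫ x in t +ᵥ s, χ x ∂μ :=
    hs.setIntegral_eq (hs.vadd_of_comm t) fun g x ↦ by
      rw [AddSubgroup.vadd_def, vadd_eq_add, AddChar.map_add_eq_mul, hΓ g g.2, one_mul]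
  by_contra hne
  exact ht ((mul_eq_right₀ hne).1 (htranslate.symm.trans hinv.symm))

variable {ι : Type*}

/-- The half-open unit cube `[0, 1)^ι`. -/
def unitCube (ι : Type*) : Set (ι → ℝ) :=
  Set.univ.pi fun _ ↦ Set.Ico 0 1

theorem abs_sub_lt_one_of_mem_unitCube {x y : ι → ℝ} (hx : x ∈ unitCube ι) (hy : y ∈ unitCube ι)
    (i : ι) : |x i - y i| < 1 := by
  have hxi := hx i (Set.mem_univ i)
  have hyi := hy i (Set.mem_univ i)
  exact abs_sub_lt_iff.2 ⟨by linarith [hxi.2, hyi.1], by linarith [hyi.2, hxi.1]⟩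

theorem pairwise_disjoint_vadd_unitCube {Γ : AddSubgroup (ι → ℝ)}
    (hΓ : ∀ x ∈ Γ, (∀ i, |x i| < 1) → x = 0) :
    Pairwise fun g h : Γ ↦ Disjoint (g +ᵥ unitCube ι) (h +ᵥ unitCube ι) := by
  refine fun g h hgh ↦ Set.disjoint_left.2 ?_
  rintro _ ⟨x, hx, rfl⟩ ⟨y, hy, hxy⟩
  refine hgh (Subtype.ext (sub_eq_zero.1 (hΓ _ (sub_mem g.2 h.2) fun i ↦ ?_)))
  have hi : (g : ι → ℝ) i - (h : ι → ℝ) i = y i - x i := by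
    have := congrFun hxy i
    simp only [AddSubgroup.vadd_def, vadd_eq_add, Pi.add_apply] at this
    linarith
  rw [Pi.sub_apply, hi]
  exact abs_sub_lt_one_of_mem_unitCube hy hx i

theorem volume_unitCube (ι : Type*) [Fintype ι] : volume (unitCube ι) = 1 := by
  simp [unitCube, Real.volume_pi_Ico]

variable [Fintype ι]

theorem isAddFundamentalDomain_unitCube {Γ : AddSubgroup (ι → ℝ)} [Countable Γ] {s : Set (ι → ℝ)}
    (hs : IsAddFundamentalDomain Γ s) (hvol : volume s ≤ 1)
    (hΓ : ∀ x ∈ Γ, (∀ i, |x i| < 1) → x = 0) : IsAddFundamentalDomain Γ (unitCube ι) :=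
  isAddFundamentalDomain_of_measure_le hs (.univ_pi fun _ ↦ measurableSet_Ico)
    (pairwise_disjoint_vadd_unitCube hΓ) (by rwa [volume_unitCube ι])
    (hvol.trans_lt ENNReal.one_lt_top).ne

theorem exists_int_of_integral_expChar_eq_zero {c : ℝ}
    (h : ∫ x in Set.Ico 0 1, expChar (c * x) = 0) : ∃ m : ℤ, m ≠ 0 ∧ c = m := by
  have hc : c ≠ 0 := by
    rintro rfl
    simp at h
  have hc' : 2 * Real.pi * Complex.I * c ≠ 0 := by simp [hc, Real.pi_ne_zero]
  simp_rw [expChar_apply, Complex.ofReal_mul, ← mul_assoc] at h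
  rw [integral_Ico_eq_integral_Ioc, ← intervalIntegral.integral_of_le zero_le_one,
    integral_exp_mul_complex hc', div_eq_zero_iff, or_iff_left hc', sub_eq_zero] at h
  obtain ⟨m, hm⟩ := (expChar_eq_one_iff (x := c)).1 (by simpa [expChar_apply] using h)
  exact ⟨m, fun hm0 ↦ hc (by simp [hm, hm0]), hm⟩

theorem exists_int_of_integral_unitCube_eq_zero [DecidableEq ι] {φ : (ι → ℝ) →ₗ[ℝ] ℝ}
    (h : ∫ x in unitCube ι, expChar (φ x) = 0) :
    ∃ i, ∃ m : ℤ, m ≠ 0 ∧ φ (Pi.single i 1) = m := by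
  have hprod (x : ι → ℝ) : expChar (φ x) = ∏ i, expChar (φ (Pi.single i 1) * x i) := by
    have hsum : φ x = ∑ i, φ (Pi.single i 1) * x i := by
      conv_lhs => rw [pi_eq_sum_univ' x]
      simp [mul_comm]
    rw [hsum]
    exact map_prod expChar.toMonoidHom
      (fun i ↦ Multiplicative.ofAdd (φ (Pi.single i 1) * x i)) Finset.univ
  simp_rw [hprod] at h
  rw [unitCube, volume_pi, Measure.restrict_pi_pi, integral_fintype_prod_eq_prod
    (f := fun i (x : ℝ) ↦ expChar (φ (Pi.single i 1) * x)), Finset.prod_eq_zero_iff] at h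
  obtain ⟨i, -, hi⟩ := h
  exact ⟨i, exists_int_of_integral_expChar_eq_zero hi⟩

end FundamentalDomain

section Lattice

open MeasureTheory

variable {ι : Type*} [Fintype ι]

theorem exists_int_apply_single [DecidableEq ι] {Γ : AddSubgroup (ι → ℝ)} [Countable Γ]
    {s : Set (ι → ℝ)} (hs : IsAddFundamentalDomain Γ s) (hvol : volume s ≤ 1)
    (hΓ : ∀ x ∈ Γ, (∀ i, |x i| < 1) → x = 0) {φ : (ι → ℝ) →ₗ[ℝ] ℝ} (hφ : φ ≠ 0)
    (hint : ∀ x ∈ Γ, ∃ m : ℤ, φ x = m) : ∃ i, ∃ m : ℤ, m ≠ 0 ∧ φ (Pi.single i 1) = m := by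
  have hχ : expChar.compAddMonoidHom φ.toAddMonoidHom ≠ 0 := by
    obtain ⟨t, ht⟩ := LinearMap.surjective hφ (1 / 2)
    refine AddChar.ne_zero_iff.2 ⟨t, fun h ↦ ?_⟩
    obtain ⟨m, hm⟩ := expChar_eq_one_iff.1 h
    have hm2 : (1 : ℝ) = 2 * m := by linarith [ht.symm.trans hm]
    norm_cast at hm2
    lia
  exact exists_int_of_integral_unitCube_eq_zero <| setIntegral_addChar_eq_zero
    (isAddFundamentalDomain_unitCube hs hvol hΓ) hχ fun x hx ↦ expChar_eq_one_iff.2 (hint x hx)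

theorem abs_det_toMatrix_basisFun_mul_volume [DecidableEq ι]
    (b : Module.Basis ι ℝ (ι → ℝ)) :
    ENNReal.ofReal |(b.toMatrix (Pi.basisFun ℝ ι)).det| *
      volume (ZSpan.fundamentalDomain b) = 1 := by
  have hb : (Matrix.of b).det = ((Pi.basisFun ℝ ι).toMatrix b).det := by
    rw [← Matrix.det_transpose]
    rfl
  rw [ZSpan.volume_fundamentalDomain, hb, ← ENNReal.ofReal_mul (abs_nonneg _), ← abs_mul,
    ← Matrix.det_mul, Module.Basis.toMatrix_mul_toMatrix_flip, Matrix.det_one, abs_one,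
    ENNReal.ofReal_one]

theorem takesNonzeroInt_transpose_toMatrix {b : Module.Basis ι ℝ (ι → ℝ)}
    (hvol : volume (ZSpan.fundamentalDomain b) ≤ 1)
    (hcube : ∀ x ∈ Submodule.span ℤ (Set.range b), (∀ i, |x i| < 1) → x = 0) :
    TakesNonzeroInt (b.toMatrix (Pi.basisFun ℝ ι)).transpose := by
  classical
  intro v hv
  let φ : (ι → ℝ) →ₗ[ℝ] ℝ := b.constr ℝ fun j ↦ (v j : ℝ)
  have hφ0 : φ ≠ 0 := fun h ↦ hv <| funext fun j ↦ by
    simpa [φ] using LinearMap.congr_fun h (b j)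
  have hφint : ∀ x ∈ Submodule.span ℤ (Set.range b), ∃ m : ℤ, φ x = m := by
    intro x hx
    obtain ⟨c, rfl⟩ := (Submodule.mem_span_range_iff_exists_fun ℤ).1 hx
    refine ⟨∑ j, c j * v j, ?_⟩
    simp_rw [map_sum, map_zsmul, φ, Module.Basis.constr_basis, zsmul_eq_mul]
    norm_cast
  have : Countable (Submodule.span ℤ (Set.range b)).toAddSubgroup :=
    inferInstanceAs (Countable (Submodule.span ℤ (Set.range b)))
  obtain ⟨i, m, hm, hi⟩ := exists_int_apply_single (ZSpan.isAddFundamentalDomain' b volume)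
    hvol hcube hφ0 hφint
  refine ⟨i, m, hm, ?_⟩
  rw [← hi]
  simp [φ, Module.Basis.constr_apply_fintype, Matrix.mulVec, dotProduct,
    Module.Basis.toMatrix_apply]

theorem exists_single_mem_span [DecidableEq ι] [Nonempty ι] {b : Module.Basis ι ℝ (ι → ℝ)}
    (hvol : volume (ZSpan.fundamentalDomain b) = 1)
    (hcube : ∀ x ∈ Submodule.span ℤ (Set.range b), (∀ i, |x i| < 1) → x = 0) :
    ∃ i, Pi.single i 1 ∈ Submodule.span ℤ (Set.range b) := by
  have hdet : |(b.toMatrix (Pi.basisFun ℝ ι)).transpose.det| = 1 := by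
    have := abs_det_toMatrix_basisFun_mul_volume b
    rwa [hvol, mul_one, ENNReal.ofReal_eq_one, ← Matrix.det_transpose] at this
  obtain ⟨i, hi⟩ := (takesNonzeroInt_transpose_toMatrix hvol.le hcube).exists_row_int
    (abs_pos.1 (hdet ▸ one_pos)) (hdet ▸ one_lt_two)
  refine ⟨i, (b.mem_span_iff_repr_mem ℤ _).2 fun j ↦ ?_⟩
  obtain ⟨m, hm⟩ := hi j
  exact ⟨m, by simpa [Module.Basis.toMatrix_apply] using hm.symm⟩

theorem IsUnimodularLattice.exists_basis {d : ℕ} {Λ : Set (Fin d → ℝ)}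
    (hΛ : IsUnimodularLattice d Λ) : ∃ b : Module.Basis (Fin d) ℝ (Fin d → ℝ),
      volume (ZSpan.fundamentalDomain b) = 1 ∧ Λ = Submodule.span ℤ (Set.range b) := by
  obtain ⟨g, hg, rfl⟩ := hΛ
  let b : Module.Basis (Fin d) ℝ (Fin d → ℝ) := (Pi.basisFun ℝ (Fin d)).map
    (g.toLinearEquiv' (g.invertibleOfIsUnitDet (hg ▸ isUnit_one)))
  have hb (i : Fin d) : b i = g.col i := by simp [b, Matrix.toLinearEquiv']
  refine ⟨b, ?_, Set.ext fun x ↦ ?_⟩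
  · have : Matrix.of b = g.transpose := Matrix.ext fun i j ↦ congrFun (hb i) j
    rw [ZSpan.volume_fundamentalDomain, this, Matrix.det_transpose, hg, abs_one,
      ENNReal.ofReal_one]
  · refine Iff.trans (exists_congr fun v ↦ ?_) (Submodule.mem_span_range_iff_exists_fun ℤ).symm
    simp_rw [eq_comm (a := x), Matrix.mulVec_eq_sum, hb, op_smul_eq_smul, Int.cast_smul_eq_zsmul]
    rfl

end Lattice

/-- Hajós's theorem: a unimodular lattice in ℝ^d whose only point in the open
cube (−1,1)^d is the origin contains some standard basis vector. -/
theorem stmt7 (d : ℕ) (hd : 0 < d) (Λ : Set (Fin d → ℝ))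
    (hΛ : IsUnimodularLattice d Λ)
    (hcube : ∀ x ∈ Λ, (∀ k, |x k| < 1) → x = 0) :
    ∃ i : Fin d, Pi.single i (1 : ℝ) ∈ Λ := by
  have : Nonempty (Fin d) := ⟨⟨0, hd⟩⟩
  obtain ⟨b, hvol, rfl⟩ := hΛ.exists_basis
  exact exists_single_mem_span hvol hcube
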